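/- Let v_1, …, v_s ∈ ℤ^n (s ≥ 2) be pairwise distinct primitive vectors, λ_1, …, λ_s ∈ ℝ, and l_j(u) = ⟨u, v_j⟩ − λ_j. Let (δ^{(i)})_{i∈ℕ} be a monotonically decreasing sequence of positive real numbers converging to 0. Let T = {u ∈ ℝ^n : the minimum of {l_1(u), …, l_s(u)} is attained by at least two distinct indices} and T^{(i)} = {u ∈ ℝ^n : the minimum of {l_1(u) + δ^{(i)}, l_2(u), …, l_s(u)} is attained by at least two distinct indices}. Then for every ε > 0 there exists ι ∈ ℕ, independent of the point, such that for all i ≥ ι and every u_1 ∈ T there exists u_2 ∈ T^{(i)} with ‖u_1 − u_2‖ < ε. -/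

import Mathlib

open scoped Classical

noncomputable section

/-- Integer inner product `⟨w, v⟩ = ∑ i, w i * v i` on `ℤ^n`. -/
def zdot {n : ℕ} (w v : Fin n → ℤ) : ℤ := ∑ i, w i * v i

/-- A lattice vector is primitive if the gcd of its entries is `1`. -/
def Primitive {n : ℕ} (w : Fin n → ℤ) : Prop := Finset.univ.gcd w = 1

/-- The affine function `l_j(u) = ⟨u, v_j⟩ - λ_j` on Euclidean space. -/
def lfE {n m : ℕ} (v : Fin m → Fin n → ℤ) (lam : Fin m → ℝ) (j : Fin m)
    (u : EuclideanSpace ℝ (Fin n)) : ℝ :=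
  (∑ i, u i * (v j i : ℝ)) - lam j

/-- The tropicalization of the family `{l_1, …, l_s}`: the set of points at which the pointwise
minimum of the family is attained by at least two distinct indices. -/
def TropAll {n s : ℕ} (v : Fin s → Fin n → ℤ) (lam : Fin s → ℝ) :
    Set (EuclideanSpace ℝ (Fin n)) :=
  {u | ∃ j₁ j₂ : Fin s, j₁ ≠ j₂ ∧ lfE v lam j₁ u = lfE v lam j₂ u ∧
        ∀ j : Fin s, lfE v lam j₁ u ≤ lfE v lam j u}

theorem lfE_update {n s : ℕ} (v : Fin s → Fin n → ℤ) (lam : Fin s → ℝ) (z k : Fin s) (d : ℝ)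
    (u : EuclideanSpace ℝ (Fin n)) :
    lfE v (Function.update lam z (lam z - d)) k u = lfE v lam k u + if k = z then d else 0 := by
  unfold lfE
  by_cases h : k = z
  · subst h
    simp
    ring
  · simp [h]

theorem lfE_line {n s : ℕ} (v : Fin s → Fin n → ℤ) (lam : Fin s → ℝ) (k : Fin s) (t : ℝ)
    (u w : EuclideanSpace ℝ (Fin n)) :
    lfE v lam k (u + t • w) = lfE v lam k u + t * ∑ i, w i * (v k i : ℝ) := by
  unfold lfE
  simp only [PiLp.add_apply, PiLp.smul_apply, smul_eq_mul, add_mul, Finset.sum_add_distrib,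
    Finset.mul_sum, mul_assoc]
  ring

/-- Main step: the minimum is attained at `z` and at `j ≠ z`. -/
theorem key {n s : ℕ} (v : Fin s → Fin n → ℤ) (lam : Fin s → ℝ)
    (hdist : Function.Injective v) (z j : Fin s) (hj : j ≠ z) (d : ℝ) (hd : 0 < d)
    (u : EuclideanSpace ℝ (Fin n)) (he : lfE v lam z u = lfE v lam j u)
    (hm : ∀ k, lfE v lam j u ≤ lfE v lam k u) :
    ∃ u₂ ∈ TropAll v (Function.update lam z (lam z - d)), dist u u₂ ≤ d := by
  set lam' := Function.update lam z (lam z - d) with hlam'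
  set w : EuclideanSpace ℝ (Fin n) := WithLp.toLp 2 (fun i => (v j i : ℝ) - v z i) with hw
  have hwi : ∀ i, w i = (v j i : ℝ) - v z i := fun i => rfl
  set N : ℝ := ∑ i, w i ^ 2 with hN
  have hN1 : 1 ≤ N := by
    have h1 : ∃ i, v j i ≠ v z i := by
      by_contra! h
      exact hj (hdist (funext h))
    obtain ⟨i, hi⟩ := h1
    have h2 : (1 : ℤ) ≤ (v j i - v z i) ^ 2 := by
      have : 0 < (v j i - v z i) ^ 2 := by
        have := sub_ne_zero.mpr hi
        positivity
      omega
    have h3 : (1 : ℝ) ≤ w i ^ 2 := by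
      rw [hwi]
      exact_mod_cast h2
    exact h3.trans (Finset.single_le_sum (f := fun i => w i ^ 2) (fun i _ => sq_nonneg _)
      (Finset.mem_univ i))
  have hnorm : ‖w‖ ^ 2 = N := by
    rw [EuclideanSpace.norm_sq_eq]
    simp [hN]
  have hw1 : 1 ≤ ‖w‖ := by
    nlinarith [norm_nonneg w]
  have hne : (Finset.univ.erase j).Nonempty := ⟨z, by simp [Ne.symm hj]⟩
  set g : ℝ → ℝ := fun t => (Finset.univ.erase j).inf' hne
    (fun k => lfE v lam' k (u + t • w) - lfE v lam' j (u + t • w)) with hg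
  have hcont : Continuous g := by
    apply Continuous.finset_inf'_apply
    intro k _
    simp only [lfE_line]
    fun_prop
  have h0 : 0 ≤ g 0 := by
    simp only [hg]
    apply Finset.le_inf'
    intro k _
    have := hm k
    simp only [zero_smul, add_zero, hlam', lfE_update, if_neg hj]
    split_ifs <;> linarith
  have hsum : ∑ i, w i * (v j i : ℝ) - ∑ i, w i * (v z i : ℝ) = N := by
    rw [hN, ← Finset.sum_sub_distrib]
    refine Finset.sum_congr rfl fun i _ => ?_
    rw [hwi]
    ring
  have hNpos : 0 < N := by linarith
  have h1 : g (d / N) ≤ 0 := by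
    refine (Finset.inf'_le _ (b := z) (by simp [Ne.symm hj])).trans ?_
    simp only [hlam', lfE_update, if_neg hj, lfE_line, if_true]
    have : d / N * (∑ i, w i * (v j i : ℝ)) - d / N * (∑ i, w i * (v z i : ℝ)) = d := by
      rw [← mul_sub, hsum]
      field_simp
    linarith
  obtain ⟨t, ⟨ht0, ht1⟩, hgt⟩ := intermediate_value_Icc' (by positivity : (0 : ℝ) ≤ d / N)
    hcont.continuousOn ⟨h1, h0⟩
  refine ⟨u + t • w, ?_, ?_⟩
  · obtain ⟨k, hk, hkg⟩ := Finset.exists_mem_eq_inf' hne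
      (fun k => lfE v lam' k (u + t • w) - lfE v lam' j (u + t • w))
    have hk0 : lfE v lam' k (u + t • w) - lfE v lam' j (u + t • w) = 0 := by
      rw [← hgt]
      exact hkg.symm
    refine ⟨j, k, (Finset.ne_of_mem_erase hk).symm, by linarith, fun m => ?_⟩
    by_cases hmj : m = j
    · rw [hmj]
    · have : g t ≤ _ := Finset.inf'_le
        (fun k => lfE v lam' k (u + t • w) - lfE v lam' j (u + t • w))
        (Finset.mem_erase.mpr ⟨hmj, Finset.mem_univ m⟩)
      rw [hgt] at this
      linarith
  · rw [dist_self_add_right, norm_smul, Real.norm_of_nonneg ht0]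
    have h3 : t * N ≤ d := (le_div_iff₀ hNpos).mp ht1
    have h4 : ‖w‖ ≤ N := by nlinarith
    exact (mul_le_mul_of_nonneg_left h4 ht0).trans h3

/-- With `l_j(u) = ⟨u, v_j⟩ - λ_j` (`s ≥ 2`, pairwise distinct primitive
`v_j`) and `δ^{(i)}` a monotonically decreasing sequence of positive reals tending to `0`, let
`T` be the tropicalization of `{l_1, …, l_s}` and `T^{(i)}` that of
`{l_1 + δ^{(i)}, l_2, …, l_s}`. For every `ε > 0` there exists `ι`, independent of the point,
such that for all `i ≥ ι` and every `u₁ ∈ T` there is `u₂ ∈ T^{(i)}` with `‖u₁ - u₂‖ < ε`. -/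
theorem statement8 {n s : ℕ} (hs : 2 ≤ s)
    (v : Fin s → Fin n → ℤ) (lam : Fin s → ℝ)
    (hdist : Function.Injective v)
    (hprim : ∀ j, Primitive (v j))
    (δ : ℕ → ℝ) (hpos : ∀ i, 0 < δ i) (hmono : Antitone δ)
    (hδ : Filter.Tendsto δ Filter.atTop (nhds 0)) :
    ∀ ε > (0 : ℝ), ∃ ι : ℕ, ∀ i ≥ ι,
      ∀ u₁ ∈ TropAll v lam,
        ∃ u₂ ∈ TropAll v (Function.update lam ⟨0, by omega⟩ (lam ⟨0, by omega⟩ - δ i)),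
          dist u₁ u₂ < ε := by
  intro ε hε
  obtain ⟨ι, hι⟩ := Filter.eventually_atTop.mp (hδ.eventually (gt_mem_nhds hε))
  refine ⟨ι, fun i hi u hu => ?_⟩
  have hlt : δ i < ε := hι i hi
  obtain ⟨a, b, hab, he, hm⟩ := hu
  by_cases ha : a = ⟨0, by omega⟩
  · subst ha
    obtain ⟨u₂, h2, h3⟩ := key v lam hdist _ b (Ne.symm hab) (δ i) (hpos i) u he
      (fun k => he ▸ hm k)
    exact ⟨u₂, h2, h3.trans_lt hlt⟩
  by_cases hb : b = ⟨0, by omega⟩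
  · subst hb
    obtain ⟨u₂, h2, h3⟩ := key v lam hdist _ a hab (δ i) (hpos i) u he.symm hm
    exact ⟨u₂, h2, h3.trans_lt hlt⟩
  refine ⟨u, ⟨a, b, hab, ?_, fun k => ?_⟩, by simpa using hε⟩
  · rw [lfE_update, lfE_update, if_neg ha, if_neg hb, he]
  · rw [lfE_update, lfE_update, if_neg ha]
    have h1 := hm k
    have h2 := hpos i
    split_ifs <;> linarith
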